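/- Let a, a′ be positive reals, b, b′ reals, and δ, ℓ positive integers satisfying: (1) 2a ≥ δ > a′; (2) (δ − a′)ℓ > (2a − a′)δ; and (3) (δ − a′)ℓ² − ((2a − a′)δ + b′ − δ + a′)ℓ − (2a − a′ + 2b − b′)δ > 0. Let G be a finite simple graph such that every subgraph H of G with minimum degree at least δ satisfies: (i) H has at most a|V(H)| + b edges, and (ii) every spanning bipartite subgraph of H has at most a′|V(H)| + b′ edges. Then G is (δ, ℓ−δ)-choosable. -/

import Mathlib

open SimpleGraph

universe u v

section Defs

variable {V : Type u} {α : Type v}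

/-- `H` is isomorphic to a subgraph of `G`: there is an injective graph homomorphism. -/
def ContainsSubgraph (G : SimpleGraph V) (H : SimpleGraph α) : Prop :=
  ∃ f : H →g G, Function.Injective f

/-- `G` is `(k,d)`-choosable: for every assignment of lists of exactly `k` colours there is a
colouring from the lists in which every vertex has at most `d` neighbours of its own colour. -/
def Choosable (G : SimpleGraph V) (k : ℕ) (d : ℤ) : Prop :=
  ∀ L : V → Finset ℕ, (∀ v, (L v).card = k) →
    ∃ c : V → ℕ, (∀ v, c v ∈ L v) ∧
      ∀ v, (({w | G.Adj v w ∧ c w = c v}.ncard : ℤ)) ≤ d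

/-- `G` is `(k,d)`-colourable: the vertices can be `k`-coloured with every vertex having at most
`d` neighbours of its own colour. -/
def DefColorable (G : SimpleGraph V) (k d : ℕ) : Prop :=
  ∃ c : V → Fin k, ∀ v, {w | G.Adj v w ∧ c w = c v}.ncard ≤ d

/-- `H` is a minor of `G`, via pairwise disjoint connected branch sets. -/
def IsMinor (H : SimpleGraph α) (G : SimpleGraph V) : Prop :=
  ∃ B : α → Set V,
    (∀ a, (B a).Nonempty) ∧
    (∀ a, (G.induce (B a)).Connected) ∧
    (Pairwise fun a b => Disjoint (B a) (B b)) ∧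
    (∀ a b, H.Adj a b → ∃ x ∈ B a, ∃ y ∈ B b, G.Adj x y)

/-- A subdivision of `H` whose path lengths all satisfy `lenOK` occurs as a subgraph of `G`:
the branch vertices are embedded injectively by `f`, each edge of `H` is replaced by a path of
`G` between the corresponding branch vertices, internal vertices of these paths avoid branch
vertices, and distinct paths meet only in common endpoints. -/
def HasSubdivWith (G : SimpleGraph V) (H : SimpleGraph α) (lenOK : ℕ → Prop) : Prop :=
  ∃ f : α → V, Function.Injective f ∧
    ∃ P : ∀ ⦃a b : α⦄, H.Adj a b → G.Walk (f a) (f b),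
      (∀ ⦃a b⦄ (h : H.Adj a b), (P h).IsPath ∧ lenOK (P h).length) ∧
      (∀ ⦃a b⦄ (h : H.Adj a b) (c : α), f c ∈ (P h).support → c = a ∨ c = b) ∧
      (∀ ⦃a b⦄ (h : H.Adj a b) ⦃a' b'⦄ (h' : H.Adj a' b'), s(a, b) ≠ s(a', b') →
        ∀ x ∈ (P h).support, x ∈ (P h').support →
          (x = f a ∨ x = f b) ∧ (x = f a' ∨ x = f b'))

/-- Some `(≤ k)`-subdivision of `H` (each edge replaced by a path of length at most `k+1`)
is a subgraph of `G`. -/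
def HasSubdivLE (G : SimpleGraph V) (k : ℕ) (H : SimpleGraph α) : Prop :=
  HasSubdivWith G H fun L => L ≤ k + 1

/-- `H` is a topological minor of `G`: some subdivision of `H` is a subgraph of `G`. -/
def HasTopMinor (G : SimpleGraph V) (H : SimpleGraph α) : Prop :=
  HasSubdivWith G H fun _ => True

/-- The exact `1`-subdivision of `H`: every edge is subdivided exactly once. -/
def exactOneSubdivision (H : SimpleGraph α) : SimpleGraph (α ⊕ H.edgeSet) :=
  SimpleGraph.fromRel fun x y =>
    match x, y with
    | Sum.inl a, Sum.inr e => a ∈ (e : Sym2 α)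
    | _, _ => False

/-- The graph `K*_{s,t}`: `K_{s,t}` together with `binom s 2` new vertices, each adjacent to a
distinct pair of vertices on the side of size `s`. -/
def KstarGraph (s t : ℕ) :
    SimpleGraph (Fin s ⊕ (Fin t ⊕ {p : Fin s × Fin s // p.1 < p.2})) :=
  SimpleGraph.fromRel fun x y =>
    match x, y with
    | Sum.inl _, Sum.inr (Sum.inl _) => True
    | Sum.inl a, Sum.inr (Sum.inr c) => a = c.1.1 ∨ a = c.1.2
    | _, _ => False

/-- The auxiliary function `N₁(s,t,δ,δ₁)`. -/
noncomputable def N1 (s t : ℕ) (δ δ₁ : ℝ) : ℝ :=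
  if s = 1 then (t : ℝ) - 1
  else if s = 2 then (δ - 2) * δ₁ * t / 2 + δ
  else (δ - s) * ((Nat.choose ⌊δ₁⌋₊ (s - 1) : ℝ) * ((t : ℝ) - 1) + δ₁ / 2) + δ

/-- The maximum average degree of `G`: maximum of `2|E(H)|/|V(H)|` over nonempty subgraphs. -/
noncomputable def mad [Fintype V] (G : SimpleGraph V) : ℝ :=
  sSup {q : ℝ | ∃ H : G.Subgraph, H.verts.Nonempty ∧
    q = 2 * (H.edgeSet.ncard : ℝ) / (H.verts.ncard : ℝ)}

/-- `∇₀(G)`: maximum of `|E(H)|/|V(H)|` over nonempty subgraphs of `G`. -/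
noncomputable def nabla0 [Fintype V] (G : SimpleGraph V) : ℝ :=
  sSup {q : ℝ | ∃ H : G.Subgraph, H.verts.Nonempty ∧
    q = (H.edgeSet.ncard : ℝ) / (H.verts.ncard : ℝ)}

/-- `∇₁(G)`: maximum of `|E(H)|/|V(H)|` over graphs `H` some `(≤2)`-subdivision of which is a
subgraph of `G`. -/
noncomputable def nabla1 [Fintype V] (G : SimpleGraph V) : ℝ :=
  sSup {q : ℝ | ∃ (n : ℕ) (H : SimpleGraph (Fin n)), 0 < n ∧
    HasSubdivLE G 2 H ∧ q = (H.edgeSet.ncard : ℝ) / (n : ℝ)}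

end Defs

/-- The vertex type of the graph `G(s,N)` (here indexed by `t = s - 2`). -/
def GVert : ℕ → ℕ → Type
  | 0, N => Fin (N + 2)
  | t + 1, N => Option (Fin (N + 1) × GVert t N)

/-- The graph `G(s,N)` (indexed by `t = s - 2`): `GGraph 0 N = G(2,N) = K_{1,N+1}`, and
`GGraph (t+1) N = G(t+3,N)` is obtained from `N+1` disjoint copies of `GGraph t N` by adding
a dominant vertex. -/
def GGraph : (t : ℕ) → (N : ℕ) → SimpleGraph (GVert t N)
  | 0, N => SimpleGraph.fromRel fun i j => i = (0 : Fin (N + 2))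
  | t + 1, N => SimpleGraph.fromRel fun x y =>
      match x, y with
      | none, some _ => True
      | some (i, a), some (j, b) => i = j ∧ (GGraph t N).Adj a b
      | _, _ => False

section More

variable {V : Type u} {α : Type v}

/-- `r` is a forest order witnessing that `H` is a subgraph of the closure of a rooted forest:
`r` is a partial order in which the set of ancestors of each vertex is a chain, and adjacent
vertices of `H` are comparable. -/
def IsForestOrder (H : SimpleGraph α) (r : α → α → Prop) : Prop :=
  IsPartialOrder α r ∧ (∀ v : α, IsChain r {u | r u v}) ∧
    (∀ x y, H.Adj x y → r x y ∨ r y x)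

/-- The tree-depth of `H`: the minimum height of a rooted forest whose closure contains `H`
as a subgraph (the height being measured as the maximum number of vertices on a
root--to--leaf path). -/
noncomputable def treeDepth (H : SimpleGraph α) : ℕ :=
  sInf {k | ∃ r : α → α → Prop, IsForestOrder H r ∧ ∀ v, {u | r u v}.ncard ≤ k}

/-- The vertex cover number `τ(H)`. -/
noncomputable def vertexCoverNumber (H : SimpleGraph α) : ℕ :=
  sInf {k | ∃ S : Set α, S.ncard = k ∧ ∀ ⦃x y⦄, H.Adj x y → x ∈ S ∨ y ∈ S}

/-- The graph obtained from `ℓ` disjoint copies of the star `K_{1,k}` by adding one dominant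
vertex. -/
def Hlk (l k : ℕ) : SimpleGraph (Option (Fin l × Fin (k + 1))) :=
  SimpleGraph.fromRel fun x y =>
    match x, y with
    | none, some _ => True
    | some (i, a), some (j, _) => i = j ∧ a = 0
    | _, _ => False

/-- The star `K_{1,k}` together with `m` isolated vertices. -/
def StarPlusIsolated (k m : ℕ) : SimpleGraph (Fin (k + 1) ⊕ Fin m) :=
  SimpleGraph.fromRel fun x y =>
    match x, y with
    | Sum.inl i, Sum.inl _ => i = 0
    | _, _ => False

/-- `G` admits a `k`-stack layout: a linear ordering of the vertices (given by an injection
into `ℕ`) and an assignment of the edges to `k` stacks so that no two edges in a common stack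
cross. -/
def HasStackLayout (G : SimpleGraph V) (k : ℕ) : Prop :=
  ∃ f : V → ℕ, Function.Injective f ∧
    ∃ σ : Sym2 V → Fin k,
      ∀ a b c d : V, G.Adj a b → G.Adj c d → σ s(a, b) = σ s(c, d) →
        ¬(f a < f c ∧ f c < f b ∧ f b < f d)

/-- `G` admits a `k`-queue layout: a linear ordering of the vertices (given by an injection
into `ℕ`) and an assignment of the edges to `k` queues so that no two edges in a common queue
are nested. -/
def HasQueueLayout (G : SimpleGraph V) (k : ℕ) : Prop :=
  ∃ f : V → ℕ, Function.Injective f ∧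
    ∃ σ : Sym2 V → Fin k,
      ∀ a b c d : V, G.Adj a b → G.Adj c d → σ s(a, b) = σ s(c, d) →
        ¬(f a < f c ∧ f c < f d ∧ f d < f b)

end More

/-!
Conditions (1)–(3) force light edges: in a nonempty `K ≤ G` whose non-isolated vertices all have
degree at least `δ`, some edge has both ends of degree less than `ℓ`. Otherwise the set `A` of
non-isolated vertices of degree less than `ℓ` is independent; let `B` be the set of remaining
non-isolated vertices and `n = |A| + |B|`. All edges at `A` cross the cut `(A, Aᶜ)`, so
`δ|A| ≤ a'n + b'`, and the handshake lemma gives `δ|A| + ℓ|B| ≤ 2(an + b)`. Eliminating `|A|` and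
`|B|` bounds `n` from above, while a vertex of `B` together with its neighbours gives `n ≥ ℓ + 1`;
the two bounds contradict (3).

The colouring is built by induction on `K ≤ G`. A vertex whose neighbours carry fewer than `δ`
colours can be given an unused colour of its list, which costs no other vertex anything. This
disposes of a vertex of degree less than `δ`. For a light edge, colour the graph without it; an end
that then has more than `ℓ - δ` neighbours of its own colour has fewer than `ℓ` neighbours in all,
hence fewer than `δ` colours on them.
-/

section Coloring

open Function

variable {V C : Type*} {G K K' : SimpleGraph V} {L : V → Finset C} {c : V → C} {d k l : ℕ} {x y : V}

/-- The defect of the colouring `c` of `K` at `v`: the number of neighbours of `v` that receive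
the same colour as `v`. -/
noncomputable def defect (K : SimpleGraph V) (c : V → C) (v : V) : ℕ :=
  {w | K.Adj v w ∧ c w = c v}.ncard

/-- `c` is a colouring of `K` from the lists `L` which has defect at most `d` at every vertex. -/
structure IsListColoring (K : SimpleGraph V) (L : V → Finset C) (d : ℕ) (c : V → C) : Prop where
  mem_list : ∀ v, c v ∈ L v
  defect_le : ∀ v, defect K c v ≤ d

/-- `K` has an edge both of whose ends have degree less than `l`. Degrees are written as `ncard`s,
so that no instance on `K` is needed. -/
def HasLightEdge (K : SimpleGraph V) (l : ℕ) : Prop :=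
  ∃ x y, K.Adj x y ∧ (K.neighborSet x).ncard < l ∧ (K.neighborSet y).ncard < l

theorem exists_isListColoring_bot (hL : ∀ v, (L v).Nonempty) :
    ∃ c, IsListColoring (⊥ : SimpleGraph V) L d c := by
  choose c hc using hL
  exact ⟨c, hc, fun v => by simp [defect]⟩

variable [Finite V]

theorem defect_le_defect_of_adj_imp (h : ∀ w, K.Adj x w → K'.Adj x w) :
    defect K c x ≤ defect K' c x :=
  Set.ncard_le_ncard fun w hw => ⟨h w hw.1, hw.2⟩

theorem defect_update_le [DecidableEq V] {q : C} (hK : K.deleteIncidenceSet x ≤ K')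
    (hq : ∀ w, K.Adj x w → c w ≠ q) (v : V) : defect K (update c x q) v ≤ defect K' c v := by
  refine Set.ncard_le_ncard fun w ⟨hvw, hcw⟩ => ?_
  have hvx : v ≠ x := by
    rintro rfl
    rw [update_self, update_of_ne hvw.ne'] at hcw
    exact hq w hvw hcw
  have hwx : w ≠ x := by
    rintro rfl
    rw [update_self, update_of_ne hvx] at hcw
    exact hq v hvw.symm hcw.symm
  rw [update_of_ne hvx, update_of_ne hwx] at hcw
  exact ⟨hK (deleteIncidenceSet_adj.2 ⟨hvw, hvx, hwx⟩), hcw⟩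

theorem IsListColoring.exists_of_ncard_image_lt (hc : IsListColoring K' L d c)
    (hK : K.deleteIncidenceSet x ≤ K') (hx : (c '' K.neighborSet x).ncard < (L x).card) :
    ∃ c', IsListColoring K L d c' := by
  classical
  obtain ⟨q, hqL, hq⟩ := Set.exists_mem_notMem_of_ncard_lt_ncard
    (hx.trans_eq (Set.ncard_coe_finset (L x)).symm)
  refine ⟨update c x q, fun v => ?_, fun v => ?_⟩
  · obtain rfl | hv := eq_or_ne v x
    · rwa [update_self]
    · rw [update_of_ne hv]
      exact hc.mem_list v
  · exact (defect_update_le hK (fun w hw hwq => hq ⟨w, hw, hwq⟩) v).trans (hc.defect_le v)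

theorem ncard_image_neighborSet_add_defect_le :
    (c '' K.neighborSet x).ncard + defect K c x ≤ (K.neighborSet x).ncard + 1 := by
  set S := {w | K.Adj x w ∧ c w = c x}
  have himage : c '' K.neighborSet x ⊆ insert (c x) (c '' (K.neighborSet x \ S)) := by
    rintro _ ⟨w, hw, rfl⟩
    by_cases hcw : c w = c x
    · exact Or.inl hcw
    · exact Or.inr ⟨w, ⟨hw, fun hS => hcw hS.2⟩, rfl⟩
  calc (c '' K.neighborSet x).ncard + S.ncard
      ≤ (c '' (K.neighborSet x \ S)).ncard + 1 + S.ncard := by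
        gcongr
        exact (Set.ncard_le_ncard himage).trans (Set.ncard_insert_le _ _)
    _ ≤ (K.neighborSet x \ S).ncard + 1 + S.ncard := by
        gcongr
        exact Set.ncard_image_le
    _ = (K.neighborSet x).ncard + 1 := by
        rw [add_right_comm, Set.ncard_sdiff_add_ncard_of_subset fun w hw => hw.1]

theorem IsListColoring.exists_of_deleteEdges
    (hc : IsListColoring (K.deleteEdges {s(x, y)}) L (l - k) c) (hL : ∀ v, (L v).card = k)
    (hkl : k ≤ l) (hxy : K.Adj x y) (hx : (K.neighborSet x).ncard < l)
    (hy : (K.neighborSet y).ncard < l) : ∃ c', IsListColoring K L (l - k) c' := by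
  by_cases hcx : (c '' K.neighborSet x).ncard < k
  · refine hc.exists_of_ncard_image_lt (deleteEdges_anti ?_) (hcx.trans_eq (hL x).symm)
    exact Set.singleton_subset_iff.2 (K.mk'_mem_incidenceSet_left_iff.2 hxy)
  by_cases hcy : (c '' K.neighborSet y).ncard < k
  · refine hc.exists_of_ncard_image_lt (deleteEdges_anti ?_) (hcy.trans_eq (hL y).symm)
    exact Set.singleton_subset_iff.2 (K.mk'_mem_incidenceSet_right_iff.2 hxy)
  refine ⟨c, hc.mem_list, fun v => ?_⟩
  obtain rfl | hvx := eq_or_ne v x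
  · have := ncard_image_neighborSet_add_defect_le (K := K) (c := c) (x := v)
    omega
  obtain rfl | hvy := eq_or_ne v y
  · have := ncard_image_neighborSet_add_defect_le (K := K) (c := c) (x := v)
    omega
  · refine (defect_le_defect_of_adj_imp fun w hvw => ?_).trans (hc.defect_le v)
    simp [hvw, hvx, hvy]

theorem exists_isListColoring_of_hasLightEdge (hk : 0 < k) (hkl : k ≤ l)
    (hL : ∀ v, (L v).card = k)
    (h : ∀ K ≤ G, K ≠ ⊥ → (∃ x ∈ K.support, (K.neighborSet x).ncard < k) ∨ HasLightEdge K l) :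
    ∃ c, IsListColoring G L (l - k) c := by
  induction G using WellFoundedLT.induction with
  | ind G ih =>
    obtain rfl | hG := eq_or_ne G ⊥
    · exact exists_isListColoring_bot fun v => Finset.card_pos.1 (hk.trans_eq (hL v).symm)
    have exists_of_lt {K} (hlt : K < G) : ∃ c, IsListColoring K L (l - k) c :=
      ih K hlt fun H hH => h H (hH.trans hlt.le)
    obtain ⟨x, ⟨y, hxy⟩, hx⟩ | ⟨x, y, hxy, hx, hy⟩ := h G le_rfl hG
    · have hlt : G.deleteIncidenceSet x < G :=
        (G.deleteIncidenceSet_le x).lt_of_not_ge fun hle =>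
          (deleteIncidenceSet_adj.1 (hle hxy)).2.1 rfl
      obtain ⟨c, hc⟩ := exists_of_lt hlt
      refine hc.exists_of_ncard_image_lt le_rfl ?_
      exact (Set.ncard_image_le (Set.toFinite _)).trans_lt (hx.trans_eq (hL x).symm)
    · have hlt : G.deleteEdges {s(x, y)} < G :=
        (G.deleteEdges_le _).lt_of_not_ge fun hle => (deleteEdges_adj.1 (hle hxy)).2 rfl
      obtain ⟨c, hc⟩ := exists_of_lt hlt
      exact hc.exists_of_deleteEdges hL hkl hxy hx hy

theorem choosable_of_hasLightEdge (hk : 0 < k) (hkl : k ≤ l)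
    (h : ∀ K ≤ G, K ≠ ⊥ → (∃ x ∈ K.support, (K.neighborSet x).ncard < k) ∨ HasLightEdge K l) :
    Choosable G k ((l : ℤ) - k) := by
  intro L hL
  obtain ⟨c, hc⟩ := exists_isListColoring_of_hasLightEdge hk hkl hL h
  rw [← Nat.cast_sub hkl]
  exact ⟨c, hc.mem_list, fun v => Nat.cast_le.2 (hc.defect_le v)⟩

end Coloring

section EdgeCounting

variable {V : Type*} {K : SimpleGraph V} {A B : Set V} {d l : ℕ}

theorem mul_card_le_sum_degree [K.LocallyFinite] {S : Finset V}
    (hS : ∀ v ∈ S, d ≤ (K.neighborSet v).ncard) : d * S.card ≤ ∑ v ∈ S, K.degree v := by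
  rw [mul_comm, ← smul_eq_mul]
  refine Finset.card_nsmul_le_sum _ _ _ fun v hv => ?_
  rw [← card_neighborFinset_eq_degree, neighborFinset, ← Set.ncard_eq_toFinset_card']
  exact hS v hv

variable [Finite V]

theorem mul_ncard_le_ncard_edgeSet_between_compl (hA : K.IsIndepSet A)
    (hdeg : ∀ v ∈ A, d ≤ (K.neighborSet v).ncard) :
    d * A.ncard ≤ (K.between A Aᶜ).edgeSet.ncard := by
  classical
  cases nonempty_fintype V
  have hbip : (K.between A Aᶜ).IsBipartiteWith A.toFinset Aᶜ.toFinset := by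
    simpa only [Set.coe_toFinset] using between_isBipartiteWith (disjoint_compl_right (a := A))
  have hneighbor : ∀ v ∈ A, (K.between A Aᶜ).neighborSet v = K.neighborSet v := by
    refine fun v hv => Set.ext fun w => ⟨fun hw => hw.1, fun hw => ⟨hw, Or.inl ⟨hv, ?_⟩⟩⟩
    exact fun hwA => hA hv hwA hw.ne hw
  calc d * A.ncard = d * A.toFinset.card := by rw [Set.ncard_eq_toFinset_card']
    _ ≤ ∑ v ∈ A.toFinset, (K.between A Aᶜ).degree v := mul_card_le_sum_degree fun v hv => by
        rw [hneighbor v (Set.mem_toFinset.1 hv)]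
        exact hdeg v (Set.mem_toFinset.1 hv)
    _ = (K.between A Aᶜ).edgeSet.ncard := by
        rw [isBipartiteWith_sum_degrees_eq_card_edges hbip, edgeFinset,
          Set.ncard_eq_toFinset_card']

theorem mul_ncard_add_mul_ncard_le_two_mul_ncard_edgeSet (hAB : Disjoint A B)
    (hA : ∀ v ∈ A, d ≤ (K.neighborSet v).ncard) (hB : ∀ v ∈ B, l ≤ (K.neighborSet v).ncard) :
    d * A.ncard + l * B.ncard ≤ 2 * K.edgeSet.ncard := by
  classical
  cases nonempty_fintype V
  calc d * A.ncard + l * B.ncard = d * A.toFinset.card + l * B.toFinset.card := by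
        rw [Set.ncard_eq_toFinset_card', Set.ncard_eq_toFinset_card']
    _ ≤ ∑ v ∈ A.toFinset, K.degree v + ∑ v ∈ B.toFinset, K.degree v :=
        add_le_add (mul_card_le_sum_degree fun v hv => hA v (Set.mem_toFinset.1 hv))
          (mul_card_le_sum_degree fun v hv => hB v (Set.mem_toFinset.1 hv))
    _ = ∑ v ∈ A.toFinset ∪ B.toFinset, K.degree v :=
        (Finset.sum_union (Set.disjoint_toFinset.2 hAB)).symm
    _ ≤ ∑ v, K.degree v := Finset.sum_le_sum_of_subset (Finset.subset_univ _)
    _ = 2 * K.edgeSet.ncard := by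
        rw [sum_degrees_eq_twice_card_edges, Set.ncard_eq_toFinset_card', edgeFinset]

theorem ncard_neighborSet_lt_ncard_support {v : V} (hv : v ∈ K.support) :
    (K.neighborSet v).ncard < K.support.ncard := by
  refine Set.ncard_lt_ncard ⟨fun w hw => ⟨v, hw.symm⟩, fun hsub => ?_⟩
  exact K.loopless.irrefl v (hsub hv)

theorem lt_ncard_support_of_not_hasLightEdge (hK : K ≠ ⊥) (hlight : ¬HasLightEdge K l) :
    l < K.support.ncard := by
  obtain ⟨x, y, hxy⟩ := ne_bot_iff_exists_adj.1 hK
  obtain ⟨z, hz, hlz⟩ : ∃ z ∈ K.support, l ≤ (K.neighborSet z).ncard := by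
    by_contra! hlow
    exact hlight ⟨x, y, hxy, hlow x hxy.mem_support_left, hlow y hxy.mem_support_right⟩
  exact hlz.trans_lt (ncard_neighborSet_lt_ncard_support hz)

theorem exists_edge_counts_of_not_hasLightEdge (hmin : ∀ v ∈ K.support, d ≤ (K.neighborSet v).ncard)
    (hlight : ¬HasLightEdge K l) :
    ∃ A ⊆ K.support, d * A.ncard ≤ (K.between A Aᶜ).edgeSet.ncard ∧
      d * A.ncard + l * (K.support \ A).ncard ≤ 2 * K.edgeSet.ncard := by
  set A : Set V := {v ∈ K.support | (K.neighborSet v).ncard < l}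
  have hA : K.IsIndepSet A := fun x hx y hy _ hxy => hlight ⟨x, y, hxy, hx.2, hy.2⟩
  refine ⟨A, fun v hv => hv.1, ?_, ?_⟩
  · exact mul_ncard_le_ncard_edgeSet_between_compl hA fun v hv => hmin v hv.1
  · exact mul_ncard_add_mul_ncard_le_two_mul_ncard_edgeSet disjoint_sdiff_self_right
      (fun v hv => hmin v hv.1) fun v hv => not_lt.1 fun hvl => hv.2 ⟨hv.1, hvl⟩

end EdgeCounting

section Elimination

variable {R : Type*} [CommRing R] [LinearOrder R] [IsStrictOrderedRing R]
  {a a' b b' δ l p q : R}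

theorem lt_of_sub_mul_lt_sub_mul (hδ : 0 ≤ δ) (h1a : δ ≤ 2 * a) (h1b : a' < δ)
    (h2 : (2 * a - a') * δ < (δ - a') * l) : δ < l := by
  have : (δ - a') * δ < (δ - a') * l :=
    (mul_le_mul_of_nonneg_right (sub_le_sub_right h1a a') hδ).trans_lt h2
  exact lt_of_mul_lt_mul_left this (sub_pos.2 h1b).le

theorem sub_mul_add_le_of_edge_counts (hδ : 0 ≤ δ) (hδl : δ ≤ l)
    (hcut : δ * p ≤ a' * (p + q) + b') (hsum : δ * p + l * q ≤ 2 * (a * (p + q) + b)) :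
    ((δ - a') * l - (2 * a - a') * δ) * (p + q) ≤ (l - δ) * b' + 2 * δ * b := by
  linear_combination (l - δ) * hcut + δ * hsum

end Elimination

section LightEdge

variable {V : Type*} [Finite V] {K : SimpleGraph V} {δ l : ℕ} {a a' b b' : ℝ}

theorem hasLightEdge_of_edge_bounds (h1a : (δ : ℝ) ≤ 2 * a) (h1b : a' < (δ : ℝ))
    (h2 : (2 * a - a') * (δ : ℝ) < ((δ : ℝ) - a') * (l : ℝ))
    (h3 : 0 < ((δ : ℝ) - a') * (l : ℝ) ^ 2
      - ((2 * a - a') * (δ : ℝ) + b' - (δ : ℝ) + a') * (l : ℝ)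
      - (2 * a - a' + 2 * b - b') * (δ : ℝ))
    (hK : K ≠ ⊥) (hmin : ∀ v ∈ K.support, δ ≤ (K.neighborSet v).ncard)
    (hE : (K.edgeSet.ncard : ℝ) ≤ a * (K.support.ncard : ℝ) + b)
    (hcut : ∀ S : Set V,
      ((K.between S Sᶜ).edgeSet.ncard : ℝ) ≤ a' * (K.support.ncard : ℝ) + b') :
    HasLightEdge K l := by
  by_contra hlight
  obtain ⟨A, hA, hcutA, hsum⟩ := exists_edge_counts_of_not_hasLightEdge hmin hlight
  set B := K.support \ A
  have hn : (K.support.ncard : ℝ) = A.ncard + B.ncard := by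
    rw [← Nat.cast_add, add_comm, Set.ncard_sdiff_add_ncard_of_subset hA]
  have hcutA' : (δ * A.ncard : ℝ) ≤ a' * (A.ncard + B.ncard) + b' := by
    rw [← hn]
    exact le_trans (by exact_mod_cast hcutA) (hcut A)
  have hsum' : (δ * A.ncard + l * B.ncard : ℝ) ≤ 2 * (a * (A.ncard + B.ncard) + b) := by
    rw [← hn]
    exact le_trans (by exact_mod_cast hsum) (mul_le_mul_of_nonneg_left hE zero_le_two)
  have hlarge : (l + 1 : ℝ) ≤ A.ncard + B.ncard := by
    rw [← hn]
    exact_mod_cast Nat.succ_le_of_lt (lt_ncard_support_of_not_hasLightEdge hK hlight)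
  have hδ : (0 : ℝ) ≤ δ := δ.cast_nonneg
  have hδl : (δ : ℝ) < l := lt_of_sub_mul_lt_sub_mul hδ h1a h1b h2
  have hupper := sub_mul_add_le_of_edge_counts hδ hδl.le hcutA' hsum'
  have hlower := mul_le_mul_of_nonneg_left hlarge (sub_pos.2 h2).le
  linarith

end LightEdge

section SupportSubgraph

variable {V : Type*} {G K : SimpleGraph V}

/-- A graph `K ≤ G` without its isolated vertices, as a subgraph of `G`. -/
def supportSubgraph (h : K ≤ G) : G.Subgraph where
  verts := K.support
  Adj := K.Adj
  adj_sub hvw := h hvw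
  edge_vert hvw := hvw.mem_support_left
  symm := K.symm

theorem edgeSet_supportSubgraph (h : K ≤ G) : (supportSubgraph h).edgeSet = K.edgeSet :=
  Set.ext fun e => e.ind fun _ _ => Iff.rfl

theorem edgeSet_between_compl (S : Set V) : (K.between S Sᶜ).edgeSet =
    {e ∈ K.edgeSet | ∀ x y, e = s(x, y) → (x ∈ S ↔ y ∉ S)} := by
  ext e
  induction e with
  | _ u v =>
    simp only [mem_edgeSet, between_adj, Set.mem_compl_iff, Set.mem_ofPred_eq, Sym2.eq_iff]
    grind

end SupportSubgraph

/-- If every subgraph `H` of `G` with minimum degree at least `δ` has at most `a|V(H)| + b`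
edges and every spanning bipartite subgraph of such an `H` has at most `a'|V(H)| + b'` edges,
then (under the stated numerical conditions) `G` is `(δ, ℓ - δ)`-choosable. -/
theorem stmt7 {V : Type} [Fintype V] (G : SimpleGraph V)
    (a a' b b' : ℝ) (δ l : ℕ) (ha : 0 < a) (ha' : 0 < a') (hδ : 1 ≤ δ) (hl : 1 ≤ l)
    (h1a : (δ : ℝ) ≤ 2 * a) (h1b : a' < (δ : ℝ))
    (h2 : (2 * a - a') * (δ : ℝ) < ((δ : ℝ) - a') * (l : ℝ))
    (h3 : 0 < ((δ : ℝ) - a') * (l : ℝ) ^ 2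
      - ((2 * a - a') * (δ : ℝ) + b' - (δ : ℝ) + a') * (l : ℝ)
      - (2 * a - a' + 2 * b - b') * (δ : ℝ))
    (hH : ∀ H : G.Subgraph, (∀ v ∈ H.verts, δ ≤ {w | H.Adj v w}.ncard) →
      ((H.edgeSet.ncard : ℝ) ≤ a * (H.verts.ncard : ℝ) + b ∧
       ∀ S : Set V,
         (({e ∈ H.edgeSet | ∀ x y, e = s(x, y) → (x ∈ S ↔ y ∉ S)}.ncard : ℝ)) ≤
           a' * (H.verts.ncard : ℝ) + b')) :
    Choosable G δ ((l : ℤ) - (δ : ℤ)) := by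
  have hδl : δ ≤ l := by
    exact_mod_cast (lt_of_sub_mul_lt_sub_mul δ.cast_nonneg h1a h1b h2).le
  refine choosable_of_hasLightEdge hδ hδl fun K hKG hK => or_iff_not_imp_left.2 fun hmin => ?_
  push Not at hmin
  obtain ⟨hE, hcut⟩ := hH (supportSubgraph hKG) hmin
  rw [edgeSet_supportSubgraph] at hE hcut
  refine hasLightEdge_of_edge_bounds h1a h1b h2 h3 hK hmin hE fun S => ?_
  rw [edgeSet_between_compl]
  exact hcut S
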